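/- Let d ≥ 1, let 𝕋^d = ℝ^d/ℤ^d be the standard d-dimensional torus with quotient homomorphism π : ℝ^d → 𝕋^d. Let A be a d×d integer matrix with determinant ±1 which is hyperbolic: there are subspaces S, U of ℝ^d with ℝ^d = S ⊕ U, A(S) = S, A(U) = U, and constants C > 0, λ ∈ (0,1) such that ‖A^n s‖ ≤ Cλ^n‖s‖ and ‖A^{-n} u‖ ≤ Cλ^n‖u‖ for all n ≥ 0, s ∈ S, u ∈ U. Let L_A : 𝕋^d → 𝕋^d be the induced automorphism (L_A ∘ π = π ∘ (x ↦ Ax)). Let F : 𝕋^d → 𝕋^d be a homeomorphism for which there exists a continuous map r̃ : 𝕋^d → ℝ^d with L_A(x) = F(x) + π(r̃(x)) for all x ∈ 𝕋^d. Then there exists a continuous surjective map h : 𝕋^d → 𝕋^d, homotopic to the identity, such that h ∘ F = L_A ∘ h. -/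

import Mathlib

/-- The quotient homomorphism `π : ℝ^d → 𝕋^d = ℝ^d/ℤ^d`, with `𝕋^d`
realized as `Fin d → AddCircle 1`. -/
noncomputable def torusProj (d : ℕ) (x : Fin d → ℝ) : Fin d → AddCircle (1 : ℝ) :=
  fun i => (x i : AddCircle (1 : ℝ))

/-!
A continuous `w : 𝕋^d → ℝ^d` with `w ∘ F = A w + r̃` makes `h = id + π ∘ w` a semiconjugacy from `F`
to `L_A`. Such a `w` exists by hyperbolicity: the component of `r̃` in `S` is summed along the
backward orbits of `F` and the component in `U` along the forward orbits, and both series converge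
geometrically.

Every map `h = id + π ∘ w` is onto, by a degree argument in the style of Milnor and Rogers. For a
lattice-periodic `C¹` map `g`, the integral of `det D(id + t g)` over a fundamental domain is a
polynomial in `t`. For small `t > 0` the map `id + t g` is a diffeomorphism carrying the fundamental
domain to another one, so this polynomial is constant, equal to the covolume, and `D(id + g)` cannot
be singular everywhere. If `H = id + g` avoided an `ε`-neighbourhood of `q + ℤ^d`, then applying to
each coordinate of `H - q` a map commuting with integer translations whose derivative vanishes
outside the `ε`-neighbourhood of `ℤ` would give an everywhere singular derivative. Smoothing `w` and
compactness of the torus extend this to continuous `w`.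
-/

open MeasureTheory Module Polynomial Set Submodule
open scoped ContDiff NNReal

section PolynomialFamilies

lemma eval_eq_sum_lagrangeBasis {K : Type*} [Field K] [DecidableEq K] {s : Finset K} {P : K[X]}
    (hP : P.natDegree < s.card) (t : K) :
    P.eval t = ∑ a ∈ s, (Lagrange.basis s id a).eval t * P.eval a := by
  have hdegree : P.degree < s.card :=
    degree_le_natDegree.trans_lt (Nat.cast_lt.mpr hP)
  conv_lhs => rw [Lagrange.eq_interpolate (injOn_id (s : Set K)) hdegree]
  simp only [Lagrange.interpolate_apply, eval_finsetSum, eval_mul, eval_C, id_eq, mul_comm]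

lemma integral_eval_eq_of_infinite {X : Type*} [MeasurableSpace X] {μ : Measure X}
    {P : X → ℝ[X]} {n : ℕ} (hdegree : ∀ x, (P x).natDegree ≤ n) {T : Set ℝ} (hT : T.Infinite)
    (hint : ∀ a ∈ T, Integrable (fun x ↦ (P x).eval a) μ) {c : ℝ}
    (hc : ∀ a ∈ T, ∫ x, (P x).eval a ∂μ = c) (t : ℝ) :
    ∫ x, (P x).eval t ∂μ = c := by
  obtain ⟨s, hsT, hs⟩ := hT.exists_subset_card_eq (n + 1)
  have hweights : ∑ a ∈ s, (Lagrange.basis s id a).eval t = 1 := by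
    simpa using (eval_eq_sum_lagrangeBasis (P := 1) (s := s) (by simp [hs]) t).symm
  calc ∫ x, (P x).eval t ∂μ
      = ∫ x, ∑ a ∈ s, (Lagrange.basis s id a).eval t * (P x).eval a ∂μ := by
        congr! 2 with x
        exact eval_eq_sum_lagrangeBasis (by grind) t
    _ = ∑ a ∈ s, (Lagrange.basis s id a).eval t * ∫ x, (P x).eval a ∂μ := by
        rw [integral_finsetSum _ fun a ha ↦ (hint a (hsT ha)).const_mul _]
        simp only [integral_const_mul]
    _ = ∑ a ∈ s, (Lagrange.basis s id a).eval t * c :=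
        Finset.sum_congr rfl fun a ha ↦ by rw [hc a (hsT ha)]
    _ = c := by rw [← Finset.sum_mul, hweights, one_mul]

lemma exists_polynomial_eval_eq_det_one_add_smul {K V : Type*} [Field K] [AddCommGroup V]
    [Module K V] [FiniteDimensional K V] (f : V →ₗ[K] V) :
    ∃ P : K[X], P.natDegree ≤ finrank K V ∧ ∀ t, P.eval t = LinearMap.det (1 + t • f) := by
  let N := LinearMap.toMatrix (finBasis K V) (finBasis K V) f
  refine ⟨((X : K[X]) • N.map C + (1 : Matrix _ _ K).map C).det, ?_, fun t ↦ ?_⟩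
  · simpa using natDegree_det_X_add_C_le N 1
  · have htoMatrix : LinearMap.toMatrix (finBasis K V) (finBasis K V) (1 + t • f) = t • N + 1 := by
      rw [map_add, map_smul, LinearMap.toMatrix_one, add_comm]
    rw [← LinearMap.det_toMatrix (finBasis K V), htoMatrix, ← coe_evalRingHom, RingHom.map_det]
    congr 1
    ext i j
    rcases eq_or_ne i j with rfl | hij
    · simp [mul_comm t]
    · simp [hij, mul_comm t]

end PolynomialFamilies

section DetOneAdd

variable {E : Type*} [NormedAddCommGroup E] [NormedSpace ℝ E] [FiniteDimensional ℝ E]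

lemma det_one_add_ne_zero_of_norm_lt_one {f : E →L[ℝ] E} (hf : ‖f‖ < 1) : (1 + f).det ≠ 0 := by
  have : CompleteSpace E := FiniteDimensional.complete ℝ E
  have hunit : IsUnit (1 + f) := by
    simpa only [sub_neg_eq_add] using isUnit_one_sub_of_norm_lt_one (x := -f) (by rwa [norm_neg])
  exact ((hunit.map ContinuousLinearMap.toLinearMapRingHom).map LinearMap.det).ne_zero

lemma det_one_add_pos_of_norm_lt_one {f : E →L[ℝ] E} (hf : ‖f‖ < 1) : 0 < (1 + f).det := by
  have hne : ∀ t ∈ Icc (0 : ℝ) 1, (1 + t • f).det ≠ 0 := fun t ht ↦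
    det_one_add_ne_zero_of_norm_lt_one <| by
      rw [norm_smul, Real.norm_of_nonneg ht.1]
      exact (mul_le_of_le_one_left (norm_nonneg f) ht.2).trans_lt hf
  have hcont : Continuous fun t : ℝ ↦ (1 + t • f).det :=
    ContinuousLinearMap.continuous_det.comp (by fun_prop)
  by_contra! hle
  have hzero : (0 : ℝ) ∈ Icc (1 + (1 : ℝ) • f).det (1 + (0 : ℝ) • f).det :=
    ⟨by simpa using hle, by simp [ContinuousLinearMap.det]⟩
  obtain ⟨t, ht, hdet⟩ := intermediate_value_Icc' zero_le_one hcont.continuousOn hzero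
  exact hne t ht hdet

end DetOneAdd

section LatticePeriodic

variable {E F ι : Type*} [NormedAddCommGroup E] [NormedSpace ℝ E] [NormedAddCommGroup F]
  [NormedSpace ℝ F]

lemma periodic_fderiv {g : E → F} {v : E} (hg : Function.Periodic g v) :
    Function.Periodic (fderiv ℝ g) v := fun x ↦ by
  rw [← fderiv_comp_add_right, hg.funext]

lemma exists_homeomorph_eq_add_of_lipschitzWith [CompleteSpace E] {g : E → E} {K : ℝ≥0}
    (hK : K < 1) (hg : LipschitzWith K g) : ∃ e : E ≃ₜ E, ∀ x, e x = x + g x := by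
  have happrox : ApproximatesLinearOn (fun x ↦ x + g x)
      (ContinuousLinearEquiv.refl ℝ E : E →L[ℝ] E) univ K := by
    rw [ApproximatesLinearOn.approximatesLinearOn_iff_lipschitzOnWith, lipschitzOnWith_univ]
    convert hg
    ext x
    simp
  refine ⟨happrox.toHomeomorph _ ?_, fun x ↦ rfl⟩
  rcases subsingleton_or_nontrivial E with hE | hE
  · exact .inl hE
  · right
    simpa using hK

variable [Finite ι] (b : Basis ι ℝ E)

lemma exists_nnnorm_fderiv_le {g : E → F} (hg : ContDiff ℝ 1 g)
    (hper : ∀ v ∈ span ℤ (range b), Function.Periodic g v) :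
    ∃ M : ℝ≥0, ∀ x, ‖fderiv ℝ g x‖₊ ≤ M := by
  have : FiniteDimensional ℝ E := b.finiteDimensional_of_finite
  have hcompact : IsCompact (range (fderiv ℝ g)) :=
    IsZLattice.isCompact_range_of_periodic (span ℤ (range b)) _ (hg.continuous_fderiv one_ne_zero)
      fun x v hv ↦ periodic_fderiv (hper v hv) x
  obtain ⟨M, hM⟩ := hcompact.isBounded.exists_norm_le
  exact ⟨M.toNNReal, fun x ↦ by
    rw [← norm_toNNReal]; exact Real.toNNReal_mono (hM _ (mem_range_self x))⟩

variable [MeasurableSpace E] [BorelSpace E]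

lemma isAddFundamentalDomain_image_fundamentalDomain (μ : Measure E) (e : E ≃ₜ E)
    (he : ∀ v ∈ span ℤ (range b), ∀ x, e (x + v) = e x + v) :
    IsAddFundamentalDomain (span ℤ (range b)) (e '' ZSpan.fundamentalDomain b) μ := by
  refine .mk' ?_ fun y ↦ ?_
  · exact (e.measurableEmbedding.measurableSet_image.mpr
      (ZSpan.fundamentalDomain_measurableSet b)).nullMeasurableSet
  · obtain ⟨x, rfl⟩ := e.surjective y
    have hmem (v : span ℤ (range b)) :
        v +ᵥ e x ∈ e '' ZSpan.fundamentalDomain b ↔ v +ᵥ x ∈ ZSpan.fundamentalDomain b := by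
      have htranslate : v +ᵥ e x = e (v +ᵥ x) := by
        simp only [Submodule.vadd_def, vadd_eq_add, add_comm (v : E), he v v.2]
      rw [htranslate, e.injective.mem_set_image]
    simpa only [hmem] using ZSpan.exist_unique_vadd_mem_fundamentalDomain b x

variable (μ : Measure E) [μ.IsAddHaarMeasure]

lemma integral_det_one_add_fderiv_of_contraction {g : E → E} (hg : Differentiable ℝ g)
    (hper : ∀ v ∈ span ℤ (range b), Function.Periodic g v) {K : ℝ≥0} (hK : K < 1)
    (hgK : ∀ x, ‖fderiv ℝ g x‖₊ ≤ K) :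
    ∫ x in ZSpan.fundamentalDomain b, (1 + fderiv ℝ g x).det ∂μ =
      μ.real (ZSpan.fundamentalDomain b) := by
  have : FiniteDimensional ℝ E := b.finiteDimensional_of_finite
  have : CompleteSpace E := FiniteDimensional.complete ℝ E
  obtain ⟨e, he⟩ := exists_homeomorph_eq_add_of_lipschitzWith hK
    (lipschitzWith_of_nnnorm_fderiv_le hg hgK)
  have hderiv (x : E) : HasFDerivAt e (1 + fderiv ℝ g x) x := by
    rw [funext he]
    exact (hasFDerivAt_id x).add (hg x).hasFDerivAt
  have hdet (x : E) : 0 < (1 + fderiv ℝ g x).det :=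
    det_one_add_pos_of_norm_lt_one ((hgK x).trans_lt hK)
  have hequivariant : ∀ v ∈ span ℤ (range b), ∀ x, e (x + v) = e x + v := fun v hv x ↦ by
    simp only [he, hper v hv x, add_right_comm]
  have hvolume : μ (e '' ZSpan.fundamentalDomain b) = μ (ZSpan.fundamentalDomain b) := by
    have : VAddInvariantMeasure (span ℤ (range b)) E μ :=
      ⟨fun v s _ ↦ measure_preimage_add μ (v : E) s⟩
    exact (isAddFundamentalDomain_image_fundamentalDomain b μ e hequivariant).measure_eq
      (ZSpan.isAddFundamentalDomain b μ)
  calc ∫ x in ZSpan.fundamentalDomain b, (1 + fderiv ℝ g x).det ∂μ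
      = ∫ x in ZSpan.fundamentalDomain b, |(1 + fderiv ℝ g x).det| • (1 : ℝ) ∂μ := by
        simp only [abs_of_pos (hdet _), smul_eq_mul, mul_one]
    _ = ∫ _ in e '' ZSpan.fundamentalDomain b, (1 : ℝ) ∂μ :=
        (integral_image_eq_integral_abs_det_fderiv_smul μ (ZSpan.fundamentalDomain_measurableSet b)
          (fun x _ ↦ (hderiv x).hasFDerivWithinAt) e.injective.injOn fun _ ↦ (1 : ℝ)).symm
    _ = μ.real (ZSpan.fundamentalDomain b) := by
        rw [setIntegral_const, smul_eq_mul, mul_one, measureReal_def, hvolume, measureReal_def]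

lemma integral_det_one_add_fderiv {g : E → E} (hg : ContDiff ℝ 1 g)
    (hper : ∀ v ∈ span ℤ (range b), Function.Periodic g v) :
    ∫ x in ZSpan.fundamentalDomain b, (1 + fderiv ℝ g x).det ∂μ =
      μ.real (ZSpan.fundamentalDomain b) := by
  have : FiniteDimensional ℝ E := b.finiteDimensional_of_finite
  obtain ⟨M, hM⟩ := exists_nnnorm_fderiv_le b hg hper
  choose P hdegree hP using fun x ↦
    exists_polynomial_eval_eq_det_one_add_smul (fderiv ℝ g x : E →ₗ[ℝ] E)
  have hPdet (x : E) (t : ℝ) : (P x).eval t = (1 + t • fderiv ℝ g x).det := hP x t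
  suffices h : ∫ x in ZSpan.fundamentalDomain b, (P x).eval 1 ∂μ =
      μ.real (ZSpan.fundamentalDomain b) by simpa only [hPdet, one_smul] using h
  refine integral_eval_eq_of_infinite hdegree (Ioo_infinite (a := (0 : ℝ)) (b := (M + 1 : ℝ)⁻¹)
    (by positivity)) (fun t _ ↦ ?_) (fun t ht ↦ ?_) 1
  · simp only [hPdet]
    have hcont : Continuous fun x ↦ (1 + t • fderiv ℝ g x).det :=
      ContinuousLinearMap.continuous_det.comp
        (continuous_const.add ((hg.continuous_fderiv one_ne_zero).const_smul t))
    exact (hcont.continuousOn.integrableOn_compact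
      (ZSpan.fundamentalDomain_isBounded b).isCompact_closure).mono_set subset_closure
  · have hgdiff : Differentiable ℝ g := hg.differentiable one_ne_zero
    have hfderiv (x : E) : fderiv ℝ (t • g) x = t • fderiv ℝ g x := fderiv_const_smul (hgdiff x) t
    simp only [hPdet, ← hfderiv]
    have htM : ‖t‖₊ * M < 1 := by
      rw [← NNReal.coe_lt_coe, NNReal.coe_mul, coe_nnnorm, Real.norm_of_nonneg ht.1.le]
      calc t * M ≤ (M + 1 : ℝ)⁻¹ * M := by gcongr; exact ht.2.le
        _ < 1 := by rw [inv_mul_lt_one₀ (by positivity)]; exact lt_add_one _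
    refine integral_det_one_add_fderiv_of_contraction b μ (hgdiff.const_smul t)
      (fun v hv x ↦ congrArg (t • ·) (hper v hv x)) htM fun x ↦ ?_
    rw [hfderiv, nnnorm_smul]
    gcongr
    exact hM x

lemma integral_det_fderiv_eq_of_periodic_sub_id {G : E → E} (hG : ContDiff ℝ 1 G)
    (hper : ∀ v ∈ span ℤ (range b), Function.Periodic (fun x ↦ G x - x) v) :
    ∫ x in ZSpan.fundamentalDomain b, (fderiv ℝ G x).det ∂μ =
      μ.real (ZSpan.fundamentalDomain b) := by
  have hfderiv (x : E) : fderiv ℝ G x = 1 + fderiv ℝ (fun x ↦ G x - x) x := by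
    rw [fderiv_fun_sub (hG.differentiable one_ne_zero x) differentiableAt_fun_id, fderiv_fun_id]
    exact (add_sub_cancel _ _).symm
  simpa only [hfderiv] using integral_det_one_add_fderiv b μ (hG.sub contDiff_fun_id) hper

end LatticePeriodic

lemma exists_det_fderiv_ne_zero_of_periodic_sub_id {E ι : Type*} [NormedAddCommGroup E]
    [NormedSpace ℝ E] [Finite ι] (b : Basis ι ℝ E) {G : E → E} (hG : ContDiff ℝ 1 G)
    (hper : ∀ v ∈ span ℤ (range b), Function.Periodic (fun x ↦ G x - x) v) :
    ∃ x, (fderiv ℝ G x).det ≠ 0 := by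
  borelize E
  have : FiniteDimensional ℝ E := b.finiteDimensional_of_finite
  by_contra! hzero
  have hvolume : 0 < (Measure.addHaar : Measure E).real (ZSpan.fundamentalDomain b) :=
    ENNReal.toReal_pos (ZSpan.measure_fundamentalDomain_ne_zero b)
      (ZSpan.fundamentalDomain_isBounded b).measure_lt_top.ne
  rw [← integral_det_fderiv_eq_of_periodic_sub_id b _ hG hper] at hvolume
  simp only [hzero, integral_zero, lt_irrefl] at hvolume

lemma exists_contDiff_periodic_dist_lt {E F : Type*} [NormedAddCommGroup E] [NormedSpace ℝ E]
    [FiniteDimensional ℝ E] [NormedAddCommGroup F] [NormedSpace ℝ F] [CompleteSpace F] {f : E → F}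
    (hf : UniformContinuous f) {ε : ℝ} (hε : 0 < ε) :
    ∃ g : E → F, ContDiff ℝ ∞ g ∧ (∀ v, Function.Periodic f v → Function.Periodic g v) ∧
      ∀ x, dist (g x) (f x) < ε := by
  borelize E
  obtain ⟨δ, hδ, hfδ⟩ := Metric.uniformContinuous_iff.mp hf (ε / 2) (half_pos hε)
  let φ : ContDiffBump (0 : E) := ⟨δ / 2, δ, half_pos hδ, half_lt_self hδ⟩
  let μ : Measure E := .addHaar
  refine ⟨convolution (φ.normed μ) f (.lsmul ℝ ℝ) μ, ?_, fun v hv x ↦ ?_, fun x ↦ ?_⟩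
  · exact φ.hasCompactSupport_normed.contDiff_convolution_left _ φ.contDiff_normed
      hf.continuous.locallyIntegrable
  · simp only [convolution_def, add_sub_right_comm x v, hv _]
  · exact (φ.dist_normed_convolution_le hf.continuous.aestronglyMeasurable
      fun y hy ↦ (hfδ hy).le).trans_lt (half_lt_self hε)

lemma exists_contDiff_add_one_deriv_eq {φ : ℝ → ℝ} (hφ : Continuous φ)
    (hper : Function.Periodic φ 1) (hint : ∫ y in (0 : ℝ)..1, φ y = 1) :
    ∃ p : ℝ → ℝ, ContDiff ℝ 1 p ∧ deriv p = φ ∧ ∀ (y : ℝ) (n : ℤ), p (y + n) = p y + n := by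
  let p : ℝ → ℝ := fun y ↦ ∫ z in (0 : ℝ)..y, φ z
  have hderiv (y : ℝ) : HasDerivAt p (φ y) y := (hφ.integral_hasStrictDerivAt 0 y).hasDerivAt
  have hpderiv : deriv p = φ := funext fun y ↦ (hderiv y).deriv
  have hpsub : Function.Periodic (fun y ↦ p y - y) 1 := fun y ↦ by
    have hadd : p y + ∫ z in y..(y + 1), φ z = p (y + 1) :=
      intervalIntegral.integral_add_adjacent_intervals (hφ.intervalIntegrable _ _)
        (hφ.intervalIntegrable _ _)
    rw [hper.intervalIntegral_add_eq y 0, zero_add, hint] at hadd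
    linarith
  refine ⟨p, contDiff_one_iff_deriv.mpr ⟨fun y ↦ (hderiv y).differentiableAt, by rwa [hpderiv]⟩,
    hpderiv, fun y n ↦ ?_⟩
  have hpn : p (y + n * 1) - (y + n * 1) = p y - y := hpsub.int_mul n y
  rw [mul_one] at hpn
  linarith

lemma exists_contDiff_deriv_eq_zero_of_le_norm {ε : ℝ} (hε : 0 < ε) :
    ∃ p : ℝ → ℝ, ContDiff ℝ 1 p ∧ (∀ (y : ℝ) (n : ℤ), p (y + n) = p y + n) ∧
      ∀ y : ℝ, ε ≤ ‖(y : UnitAddCircle)‖ → deriv p y = 0 := by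
  let bump : ℝ → ℝ := fun y ↦ max 0 (ε - ‖(y : UnitAddCircle)‖)
  have hcont : Continuous bump :=
    continuous_const.max (continuous_const.sub (AddCircle.continuous_mk' 1).norm)
  have hper : Function.Periodic bump 1 := fun y ↦ by
    simp only [bump, AddCircle.coe_add_period]
  have hpos : 0 < ∫ y in (0 : ℝ)..1, bump y :=
    intervalIntegral.integral_pos one_pos hcont.continuousOn (fun y _ ↦ le_max_left _ _)
      ⟨0, by simp, by simpa [bump] using hε⟩
  obtain ⟨p, hp, hderiv, hadd⟩ := exists_contDiff_add_one_deriv_eq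
    (hcont.div_const (∫ y in (0 : ℝ)..1, bump y)) (fun y ↦ by simp only [hper y])
    (by rw [intervalIntegral.integral_div, div_self hpos.ne'])
  refine ⟨p, hp, hadd, fun y hy ↦ ?_⟩
  simp only [hderiv, bump, max_eq_left (sub_nonpos.mpr hy), zero_div]

lemma det_eq_zero_of_apply_eq_zero {K ι : Type*} [Field K] [Finite ι]
    {f : (ι → K) →ₗ[K] (ι → K)} (i : ι) (hf : ∀ v, f v i = 0) : LinearMap.det f = 0 := by
  classical
  have := Fintype.ofFinite ι
  rw [← LinearMap.det_toMatrix']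
  exact Matrix.det_eq_zero_of_row_eq_zero i fun j ↦ hf _

lemma det_fderiv_pi_comp_eq_zero {ι : Type*} [Finite ι] {p : ℝ → ℝ}
    (hp : Differentiable ℝ p) {H : (ι → ℝ) → (ι → ℝ)} (hH : Differentiable ℝ H) {x : ι → ℝ} {i : ι}
    (hi : deriv p (H x i) = 0) : (fderiv ℝ (fun y j ↦ p (H y j)) x).det = 0 := by
  refine det_eq_zero_of_apply_eq_zero i fun v ↦ ?_
  have := Fintype.ofFinite ι
  have hderiv (j : ι) := (hp (H x j)).hasDerivAt.comp_hasFDerivAt x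
    (hasFDerivAt_pi'.mp (hH x).hasFDerivAt j)
  have hfderiv := (hasFDerivAt_pi.mpr hderiv).fderiv
  simp only [Function.comp_def] at hfderiv
  simp [hfderiv, hi]

lemma exists_intCast_eq_of_mem_span_basisFun {ι : Type*} [Finite ι] {v : ι → ℝ}
    (hv : v ∈ span ℤ (range (Pi.basisFun ℝ ι))) (i : ι) : ∃ n : ℤ, v i = n := by
  obtain ⟨n, hn⟩ := ((Pi.basisFun ℝ ι).mem_span_iff_repr_mem ℤ v).mp hv i
  exact ⟨n, by simpa using hn.symm⟩

section Torus
variable {d : ℕ}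

lemma torusProj_add (x y : Fin d → ℝ) : torusProj d (x + y) = torusProj d x + torusProj d y := rfl

lemma torusProj_sub (x y : Fin d → ℝ) : torusProj d (x - y) = torusProj d x - torusProj d y := rfl

lemma torusProj_zero : torusProj d 0 = 0 := rfl

lemma torusProj_surjective : Function.Surjective (torusProj d) :=
  Function.Surjective.piMap fun _ ↦ QuotientAddGroup.mk_surjective

lemma norm_torusProj_le (x : Fin d → ℝ) : ‖torusProj d x‖ ≤ ‖x‖ :=
  (pi_norm_le_iff_of_nonneg (norm_nonneg x)).mpr fun i ↦
    QuotientAddGroup.norm_mk_le_norm.trans (norm_le_pi_norm x i)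

lemma lipschitzWith_torusProj : LipschitzWith 1 (torusProj d) :=
  LipschitzWith.mk_one fun x y ↦ by
    simpa only [dist_eq_norm, torusProj_sub] using norm_torusProj_le (x - y)

lemma periodic_torusProj {v : Fin d → ℝ} (hv : v ∈ span ℤ (range (Pi.basisFun ℝ (Fin d)))) :
    Function.Periodic (torusProj d) v := fun x ↦ funext fun i ↦ by
  obtain ⟨n, hn⟩ := exists_intCast_eq_of_mem_span_basisFun hv i
  simp [torusProj, hn]

lemma exists_norm_torusProj_sub_lt_of_contDiff {H : (Fin d → ℝ) → (Fin d → ℝ)}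
    (hH : ContDiff ℝ 1 H) (hper : ∀ v ∈ span ℤ (range (Pi.basisFun ℝ (Fin d))),
      Function.Periodic (fun x ↦ H x - x) v) (q : Fin d → ℝ) {ε : ℝ} (hε : 0 < ε) :
    ∃ x, ‖torusProj d (H x - q)‖ < ε := by
  obtain ⟨p, hp, hadd, hderiv⟩ := exists_contDiff_deriv_eq_zero_of_le_norm hε
  let G : (Fin d → ℝ) → (Fin d → ℝ) := fun x i ↦ p ((H x - q) i)
  have hHq : ContDiff ℝ 1 fun x ↦ H x - q := hH.sub contDiff_const
  have hG : ContDiff ℝ 1 G := contDiff_pi.mpr fun i ↦ hp.comp (contDiff_pi.mp hHq i)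
  have hGper : ∀ v ∈ span ℤ (range (Pi.basisFun ℝ (Fin d))),
      Function.Periodic (fun x ↦ G x - x) v := fun v hv x ↦ funext fun i ↦ by
    obtain ⟨n, hn⟩ := exists_intCast_eq_of_mem_span_basisFun hv i
    have hHn : H (x + v) i = H x i + n := by
      have := congrFun (hper v hv x) i
      simp only [Pi.sub_apply, Pi.add_apply, hn] at this
      linarith
    simp only [G, Pi.sub_apply, Pi.add_apply, hHn, hn, add_sub_right_comm _ (n : ℝ), hadd]
    ring
  -- Where some coordinate of `H x - q` is far from `ℤ`, the map `G` has a singular derivative.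
  obtain ⟨x, hx⟩ := exists_det_fderiv_ne_zero_of_periodic_sub_id (Pi.basisFun ℝ (Fin d)) hG hGper
  refine ⟨x, (pi_norm_lt_iff hε).mpr fun i ↦ ?_⟩
  contrapose! hx
  exact det_fderiv_pi_comp_eq_zero (hp.differentiable one_ne_zero)
    (hHq.differentiable one_ne_zero) (hderiv _ hx)

/-- The self-map `y ↦ y + π (w y)` of the torus which displaces every point by the projection of
the vector field `w`. -/
noncomputable def displace (w : C(UnitAddTorus (Fin d), Fin d → ℝ)) :
    C(UnitAddTorus (Fin d), UnitAddTorus (Fin d)) where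
  toFun y := y + torusProj d (w y)
  continuous_toFun := continuous_id.add (lipschitzWith_torusProj.continuous.comp w.continuous)

variable (w : C(UnitAddTorus (Fin d), Fin d → ℝ))

lemma displace_apply (y : UnitAddTorus (Fin d)) : displace w y = y + torusProj d (w y) := rfl

lemma displace_homotopic_id : (displace w).Homotopic (.id _) := by
  refine ⟨⟨⟨fun z ↦ z.2 + torusProj d ((1 - (z.1 : ℝ)) • w z.2), ?_⟩, fun y ↦ ?_, fun y ↦ ?_⟩⟩
  · exact continuous_snd.add (lipschitzWith_torusProj.continuous.comp (by fun_prop))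
  · simp [displace_apply]
  · simp [torusProj_zero]

lemma denseRange_displace : DenseRange (displace w) := by
  refine Metric.denseRange_iff.mpr fun q ε hε ↦ ?_
  obtain ⟨q, rfl⟩ := torusProj_surjective q
  have huc : UniformContinuous (w ∘ torusProj d) :=
    (CompactSpace.uniformContinuous_of_continuous w.continuous).comp
      lipschitzWith_torusProj.uniformContinuous
  obtain ⟨g, hg, hgper, hgw⟩ := exists_contDiff_periodic_dist_lt huc (half_pos hε)
  obtain ⟨x, hx⟩ := exists_norm_torusProj_sub_lt_of_contDiff (H := fun x ↦ x + g x)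
    (contDiff_id.add (hg.of_le (by simp))) (fun v hv x ↦ by
      simpa using hgper v ((periodic_torusProj hv).comp w) x) q (half_pos hε)
  have hgwx : ‖g x - w (torusProj d x)‖ < ε / 2 := by
    simpa only [dist_eq_norm, Function.comp_apply] using hgw x
  refine ⟨torusProj d x, ?_⟩
  have hsplit : torusProj d q - displace w (torusProj d x) =
      torusProj d (g x - w (torusProj d x)) - torusProj d (x + g x - q) := by
    simp only [displace_apply, torusProj_add, torusProj_sub]
    abel
  calc dist (torusProj d q) (displace w (torusProj d x))
      = ‖torusProj d (g x - w (torusProj d x)) - torusProj d (x + g x - q)‖ := by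
        rw [dist_eq_norm, hsplit]
    _ ≤ ‖torusProj d (g x - w (torusProj d x))‖ + ‖torusProj d (x + g x - q)‖ := norm_sub_le _ _
    _ < ε / 2 + ε / 2 := add_lt_add ((norm_torusProj_le _).trans_lt hgwx) hx
    _ = ε := add_halves ε

lemma displace_surjective : Function.Surjective (displace w) := by
  rw [← range_eq_univ, ← (isCompact_range (displace w).continuous).isClosed.closure_eq]
  exact (denseRange_displace w).closure_range

lemma displace_semiconj {M : Matrix (Fin d) (Fin d) ℝ}
    {LA F : UnitAddTorus (Fin d) → UnitAddTorus (Fin d)} {r : UnitAddTorus (Fin d) → Fin d → ℝ}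
    (hLA : ∀ x, LA (torusProj d x) = torusProj d (M.mulVec x))
    (hr : ∀ x, LA x = F x + torusProj d (r x)) (hw : ∀ x, w (F x) = M.mulVec (w x) + r x) :
    Function.Semiconj (displace w) F LA := by
  intro y
  obtain ⟨x, rfl⟩ := torusProj_surjective y
  calc displace w (F (torusProj d x))
      = LA (torusProj d x) + torusProj d (M.mulVec (w (torusProj d x))) := by
        rw [displace_apply, hw, torusProj_add, hr]
        abel
    _ = LA (displace w (torusProj d x)) := by
        rw [displace_apply, ← torusProj_add, hLA, hLA, Matrix.mulVec_add, torusProj_add]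

end Torus

section CohomologicalEquation

variable {T E : Type*} [TopologicalSpace T] [NormedAddCommGroup E] [NormedSpace ℝ E]

lemma exists_continuousMap_eq_apply_comp_add [CompleteSpace E] (B : E →L[ℝ] E) (G : C(T, T))
    (r : C(T, E)) {a : ℕ → ℝ} (ha : Summable a) (hr : ∀ n x, ‖(B ^ n) (r x)‖ ≤ a n) :
    ∃ w : C(T, E), ∀ x, w x = B (w (G x)) + r x := by
  have hsummable (x : T) : Summable fun n ↦ (B ^ n) (r (G^[n] x)) :=
    .of_norm_bounded ha fun n ↦ hr n _
  have hcont : Continuous fun x ↦ ∑' n, (B ^ n) (r (G^[n] x)) :=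
    continuous_tsum (fun n ↦ (B ^ n).continuous.comp (r.continuous.comp (G.continuous.iterate n)))
      ha fun n x ↦ hr n _
  refine ⟨⟨_, hcont⟩, fun x ↦ ?_⟩
  calc ∑' n, (B ^ n) (r (G^[n] x))
      = r x + ∑' n, B ((B ^ n) (r (G^[n] (G x)))) := by
        simp only [(hsummable x).tsum_eq_zero_add, pow_zero, one_apply_eq_self,
          Function.iterate_zero_apply, pow_succ', mul_apply_eq_comp,
          Function.iterate_succ_apply]
    _ = B (∑' n, (B ^ n) (r (G^[n] (G x)))) + r x := by
        rw [B.map_tsum (hsummable (G x)), add_comm]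

variable [CompactSpace T] [FiniteDimensional ℝ E]

lemma exists_continuousMap_eq_apply_comp_add_of_mem {B : E →ₗ[ℝ] E} {V : Submodule ℝ E} {C lam : ℝ}
    (hC : 0 ≤ C) (hlam0 : 0 ≤ lam) (hlam1 : lam < 1)
    (hB : ∀ n : ℕ, ∀ v ∈ V, ‖(B ^ n) v‖ ≤ C * lam ^ n * ‖v‖) (G : C(T, T)) {r : C(T, E)}
    (hr : ∀ x, r x ∈ V) : ∃ w : C(T, E), ∀ x, w x = B (w (G x)) + r x := by
  have : CompleteSpace E := FiniteDimensional.complete ℝ E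
  have hsummable : Summable fun n : ℕ ↦ C * lam ^ n * ‖r‖ :=
    ((summable_geometric_of_lt_one hlam0 hlam1).mul_left C).mul_right ‖r‖
  refine exists_continuousMap_eq_apply_comp_add B.toContinuousLinearMap G r hsummable fun n x ↦ ?_
  calc ‖(B.toContinuousLinearMap ^ n) (r x)‖ = ‖(B ^ n) (r x)‖ := by simp [Module.End.pow_apply]
    _ ≤ C * lam ^ n * ‖r x‖ := hB n _ (hr x)
    _ ≤ C * lam ^ n * ‖r‖ := by gcongr; exact r.norm_coe_le_norm x

lemma exists_continuousMap_comp_eq_apply_add {A B : E →ₗ[ℝ] E} (hAB : A ∘ₗ B = .id)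
    {S U : Submodule ℝ E} (hSU : IsCompl S U) {C lam : ℝ}
    (hC : 0 ≤ C) (hlam0 : 0 ≤ lam) (hlam1 : lam < 1)
    (hstable : ∀ n : ℕ, ∀ s ∈ S, ‖(A ^ n) s‖ ≤ C * lam ^ n * ‖s‖)
    (hunstable : ∀ n : ℕ, ∀ u ∈ U, ‖(B ^ n) u‖ ≤ C * lam ^ n * ‖u‖) (F : T ≃ₜ T) (r : C(T, E)) :
    ∃ w : C(T, E), ∀ x, w (F x) = A (w x) + r x := by
  let P : E →L[ℝ] E := (S.projection U hSU).toContinuousLinearMap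
  let rs : C(T, E) := ⟨fun x ↦ P (r x), by fun_prop⟩
  obtain ⟨ws, hws⟩ := exists_continuousMap_eq_apply_comp_add_of_mem (r := rs) hC hlam0 hlam1 hstable
    F.symm fun x ↦ S.projection_apply_mem hSU (r x)
  obtain ⟨wu, hwu⟩ := exists_continuousMap_eq_apply_comp_add_of_mem (r := r - rs) hC hlam0 hlam1
    hunstable F fun x ↦ sub_projection_mem hSU (r x)
  refine ⟨⟨fun x ↦ ws (F.symm x) - B.toContinuousLinearMap (wu x), by fun_prop⟩, fun x ↦ ?_⟩
  calc ws (F.symm (F x)) - B (wu (F x))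
      = A (ws (F.symm x)) + rs x - (wu x - (r x - rs x)) := by
        rw [F.symm_apply_apply, hws x, hwu x]
        simp
    _ = A (ws (F.symm x)) - A (B (wu x)) + r x := by
        rw [← A.comp_apply, hAB, LinearMap.id_apply]
        abel
    _ = A (ws (F.symm x) - B (wu x)) + r x := by rw [map_sub]

end CohomologicalEquation

lemma mulVecLin_comp_mulVecLin_nonsing_inv {n K : Type*} [Fintype n] [DecidableEq n] [CommRing K]
    {M : Matrix n n K} (hM : IsUnit M.det) : M.mulVecLin ∘ₗ M⁻¹.mulVecLin = .id := by
  rw [← Matrix.mulVecLin_mul, Matrix.mul_nonsing_inv M hM, Matrix.mulVecLin_one]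

lemma isUnit_det_map_intCast {n K : Type*} [Fintype n] [DecidableEq n] [CommRing K]
    {A : Matrix n n ℤ} (hA : IsUnit A.det) : IsUnit (A.map (Int.cast : ℤ → K)).det := by
  have hdet : (A.map (Int.cast : ℤ → K)).det = Int.castRingHom K A.det :=
    ((Int.castRingHom K).map_det A).symm
  exact hdet ▸ hA.map (Int.castRingHom K)

/-- Corollary 5.2 in the single-fibre case (Franks-type semi-conjugacy): a
homeomorphism `F` of `𝕋^d` which differs from the hyperbolic automorphism `L_A` by
the projection of a continuous `ℝ^d`-valued map is semi-conjugate to `L_A` via a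
continuous surjection homotopic to the identity. -/
theorem stmt11
    (d : ℕ) (hd : 1 ≤ d)
    (A : Matrix (Fin d) (Fin d) ℤ) (hdet : A.det = 1 ∨ A.det = -1)
    (S U : Submodule ℝ (Fin d → ℝ)) (hSU : IsCompl S U)
    (hAS : S.map (A.map (Int.cast : ℤ → ℝ)).mulVecLin = S)
    (hAU : U.map (A.map (Int.cast : ℤ → ℝ)).mulVecLin = U)
    (C lam : ℝ) (hC : 0 < C) (hlam0 : 0 < lam) (hlam1 : lam < 1)
    (hstab : ∀ n : ℕ, ∀ s ∈ S,
      ‖((A.map (Int.cast : ℤ → ℝ)).mulVecLin ^ n) s‖ ≤ C * lam ^ n * ‖s‖)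
    (hunst : ∀ n : ℕ, ∀ u ∈ U,
      ‖(((A.map (Int.cast : ℤ → ℝ))⁻¹).mulVecLin ^ n) u‖ ≤ C * lam ^ n * ‖u‖)
    (LA : (Fin d → AddCircle (1 : ℝ)) → (Fin d → AddCircle (1 : ℝ)))
    (hLA : ∀ x : Fin d → ℝ,
      LA (torusProj d x) = torusProj d ((A.map (Int.cast : ℤ → ℝ)).mulVec x))
    (F : (Fin d → AddCircle (1 : ℝ)) ≃ₜ (Fin d → AddCircle (1 : ℝ)))
    (rt : (Fin d → AddCircle (1 : ℝ)) → (Fin d → ℝ)) (hrt : Continuous rt)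
    (hr : ∀ x : Fin d → AddCircle (1 : ℝ), LA x = F x + torusProj d (rt x)) :
    ∃ h : C((Fin d → AddCircle (1 : ℝ)), (Fin d → AddCircle (1 : ℝ))),
      Function.Surjective h ∧
      h.Homotopic (ContinuousMap.id (Fin d → AddCircle (1 : ℝ))) ∧
      ∀ x : Fin d → AddCircle (1 : ℝ), h (F x) = LA (h x) := by
  have hunit := isUnit_det_map_intCast (K := ℝ) (Int.isUnit_iff.mpr hdet)
  obtain ⟨w, hw⟩ := exists_continuousMap_comp_eq_apply_add
    (mulVecLin_comp_mulVecLin_nonsing_inv hunit) hSU hC.le hlam0.le hlam1 hstab hunst F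
    ⟨rt, hrt⟩
  exact ⟨displace w, displace_surjective w, displace_homotopic_id w, displace_semiconj w hLA hr hw⟩
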